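/- Let G be a finite connected simple graph with a cut-partition 𝒞 such that no shortest path in G uses two edges of the same cut C ∈ 𝒞. For a vertex v, let h_v be the minimum cardinality of a set H ⊆ V(G) such that for every cut C ∈ 𝒞, H contains a vertex of the side of C not containing v. Then the hull number of G satisfies hn(G) = (min over all vertices v of h_v) + 1. -/

import Mathlib

/-- A set of vertices is (geodesically) convex. -/
def GConvex {V : Type*} (G : SimpleGraph V) (S : Set V) : Prop :=
  ∀ u ∈ S, ∀ w ∈ S, ∀ x : V, G.dist u x + G.dist x w = G.dist u w → x ∈ S

/-- The convex hull of a set of vertices: the smallest convex set containing it. -/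
def GConvexHull {V : Type*} (G : SimpleGraph V) (S : Set V) : Set V :=
  ⋂₀ {T : Set V | GConvex G T ∧ S ⊆ T}

/-- The hull number: the minimum cardinality of a hull set. -/
noncomputable def hullNumber {V : Type*} (G : SimpleGraph V) : ℕ :=
  sInf {n : ℕ | ∃ H : Set V, GConvexHull G H = Set.univ ∧ H.ncard = n}

/-- A cut of a connected simple graph: an inclusion-minimal set of edges whose
removal disconnects the graph. -/
def IsCut {V : Type*} (G : SimpleGraph V) (C : Set (Sym2 V)) : Prop :=
  C ⊆ G.edgeSet ∧ ¬ (G.deleteEdges C).Connected ∧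
    ∀ C' : Set (Sym2 V), C' ⊂ C → (G.deleteEdges C').Connected

/-- A cut-partition: a set of cuts partitioning the edge set. -/
def IsCutPartition {V : Type*} (G : SimpleGraph V) (𝒞 : Set (Set (Sym2 V))) : Prop :=
  (∀ C ∈ 𝒞, IsCut G C) ∧ 𝒞.PairwiseDisjoint id ∧ ⋃₀ 𝒞 = G.edgeSet

/-- A side of a cut `C`: the vertex set of a connected component of `G` minus `C`. -/
def IsSide {V : Type*} (G : SimpleGraph V) (C : Set (Sym2 V)) (S : Set V) : Prop :=
  ∃ x : V, S = {y : V | (G.deleteEdges C).Reachable y x}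

open Classical in
/-- The number of edges of a walk (with multiplicity) belonging to a given edge set. -/
noncomputable def cutUse {V : Type*} (G : SimpleGraph V) {u w : V} (p : G.Walk u w)
    (C : Set (Sym2 V)) : ℕ :=
  p.edges.countP fun e => decide (e ∈ C)

/-- `oneSidedHitting G 𝒞 v` is `h_v`: the minimum cardinality of a set `H` of vertices
hitting, for every cut `C ∈ 𝒞`, the side of `C` not containing `v`. -/
noncomputable def oneSidedHitting {V : Type*} (G : SimpleGraph V)
    (𝒞 : Set (Set (Sym2 V))) (v : V) : ℕ :=
  sInf {n : ℕ | ∃ H : Set V,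
    (∀ C ∈ 𝒞, ∀ S : Set V, IsSide G C S → v ∉ S → (S ∩ H).Nonempty) ∧ H.ncard = n}

/-!
By minimality every edge of a cut joins its two sides, so a walk crosses a cut evenly often exactly
when its ends lie on the same side. Hence a walk crossing each cut of `𝒞` at most once is a
geodesic: any other walk with the same ends must cross the same cuts. It follows that if `xy` is an
edge of `C ∈ 𝒞` and `w` lies on the side of `y`, then `y` is on a geodesic from `x` to `w`. So a
nonempty convex set meeting both sides of every cut is closed under adjacency, and is everything.
Conversely, the complement of a side is a side, hence convex, so a hull set meets every side. A hull
set is therefore the same as a vertex `v` together with a set hitting every side that misses `v`.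
-/

section HullAndHitting

variable {V : Type*} {G : SimpleGraph V} {H T : Set V}

theorem subset_gConvexHull (G : SimpleGraph V) (H : Set V) : H ⊆ GConvexHull G H :=
  Set.subset_sInter fun _ hT => hT.2

theorem gConvex_gConvexHull (G : SimpleGraph V) (H : Set V) : GConvex G (GConvexHull G H) :=
  fun u hu w hw x hx T hT => hT.1 u (hu T hT) w (hw T hT) x hx

theorem gConvexHull_subset (hT : GConvex G T) (hHT : H ⊆ T) : GConvexHull G H ⊆ T :=
  Set.sInter_subset_of_mem ⟨hT, hHT⟩

theorem gConvexHull_empty (G : SimpleGraph V) : GConvexHull G ∅ = ∅ :=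
  Set.subset_empty_iff.1 (gConvexHull_subset (fun _ hu => hu.elim) subset_rfl)

theorem gConvexHull_univ (G : SimpleGraph V) : GConvexHull G Set.univ = Set.univ :=
  Set.univ_subset_iff.1 (subset_gConvexHull G _)

theorem nonempty_of_gConvexHull_eq_univ [Nonempty V] (hH : GConvexHull G H = Set.univ) :
    H.Nonempty := by
  rw [Set.nonempty_iff_ne_empty]
  rintro rfl
  exact Set.empty_ne_univ ((gConvexHull_empty G).symm.trans hH)

theorem hullNumber_le_ncard (hH : GConvexHull G H = Set.univ) : hullNumber G ≤ H.ncard :=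
  Nat.sInf_le ⟨H, hH, rfl⟩

theorem exists_ncard_eq_hullNumber (G : SimpleGraph V) :
    ∃ H : Set V, GConvexHull G H = Set.univ ∧ H.ncard = hullNumber G :=
  Nat.sInf_mem (s := {n | ∃ H : Set V, GConvexHull G H = Set.univ ∧ H.ncard = n})
    ⟨_, Set.univ, gConvexHull_univ G, rfl⟩

variable {C : Set (Sym2 V)} {𝒞 : Set (Set (Sym2 V))} {S : Set V} {v : V}

theorem IsSide.nonempty (hS : IsSide G C S) : S.Nonempty := by
  obtain ⟨x, rfl⟩ := hS
  exact ⟨x, .rfl⟩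

/-- The sets `H` whose least cardinality is `h_v`: those meeting, for each cut in `𝒞`, the side that
does not contain `v`. -/
def IsOneSidedHitting (G : SimpleGraph V) (𝒞 : Set (Set (Sym2 V))) (v : V) (H : Set V) : Prop :=
  ∀ C ∈ 𝒞, ∀ S : Set V, IsSide G C S → v ∉ S → (S ∩ H).Nonempty

theorem IsOneSidedHitting.oneSidedHitting_le_ncard (hH : IsOneSidedHitting G 𝒞 v H) :
    oneSidedHitting G 𝒞 v ≤ H.ncard :=
  Nat.sInf_le ⟨H, hH, rfl⟩

theorem isOneSidedHitting_univ (G : SimpleGraph V) (𝒞 : Set (Set (Sym2 V))) (v : V) :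
    IsOneSidedHitting G 𝒞 v Set.univ :=
  fun _ _ S hS _ => (Set.inter_univ S).symm ▸ hS.nonempty

theorem exists_ncard_eq_oneSidedHitting (G : SimpleGraph V) (𝒞 : Set (Set (Sym2 V))) (v : V) :
    ∃ H : Set V, IsOneSidedHitting G 𝒞 v H ∧ H.ncard = oneSidedHitting G 𝒞 v :=
  Nat.sInf_mem (s := {n | ∃ H : Set V, IsOneSidedHitting G 𝒞 v H ∧ H.ncard = n})
    ⟨_, Set.univ, isOneSidedHitting_univ G 𝒞 v, rfl⟩

theorem isOneSidedHitting_iff_forall_inter_insert_nonempty :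
    IsOneSidedHitting G 𝒞 v H ↔
      ∀ C ∈ 𝒞, ∀ S : Set V, IsSide G C S → (S ∩ insert v H).Nonempty := by
  refine forall₂_congr fun C _ => forall₂_congr fun S _ => ⟨fun hH => ?_, fun hH hvS => ?_⟩
  · by_cases hvS : v ∈ S
    · exact ⟨v, hvS, Set.mem_insert v H⟩
    · exact (hH hvS).mono (Set.inter_subset_inter_right S (Set.subset_insert v H))
  · rwa [Set.inter_insert_of_notMem hvS] at hH

end HullAndHitting

section Cut

variable {V : Type*} {G : SimpleGraph V} {C : Set (Sym2 V)}

theorem cutUse_nil (G : SimpleGraph V) (u : V) (C : Set (Sym2 V)) :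
    cutUse G (.nil : G.Walk u u) C = 0 := by
  simp [cutUse]

open Classical in
theorem cutUse_cons {u x w : V} (h : G.Adj u x) (p : G.Walk x w) (C : Set (Sym2 V)) :
    cutUse G (.cons h p) C = cutUse G p C + if s(u, x) ∈ C then 1 else 0 := by
  simp [cutUse, List.countP_cons]

theorem cutUse_append {u x w : V} (p : G.Walk u x) (q : G.Walk x w) (C : Set (Sym2 V)) :
    cutUse G (p.append q) C = cutUse G p C + cutUse G q C := by
  simp [cutUse, SimpleGraph.Walk.edges_append]

theorem reachable_deleteEdges_of_adj {x y : V} (h : G.Adj x y) (hxy : s(x, y) ∉ C) :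
    (G.deleteEdges C).Reachable x y :=
  (SimpleGraph.deleteEdges_adj.2 ⟨h, hxy⟩).reachable

theorem reachable_deleteEdges_singleton_or {x a : V} (h : G.Reachable x a) (b : V) :
    (G.deleteEdges {s(a, b)}).Reachable x a ∨ (G.deleteEdges {s(a, b)}).Reachable x b := by
  rw [SimpleGraph.reachable_iff_reflTransGen] at h
  induction h using Relation.ReflTransGen.head_induction_on with
  | refl => exact .inl .rfl
  | @head x y hxy _ ih =>
    by_cases he : s(x, y) = s(a, b)
    · rcases Sym2.eq_iff.1 he with ⟨rfl, -⟩ | ⟨rfl, -⟩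
      · exact .inl .rfl
      · exact .inr .rfl
    · have hreach := reachable_deleteEdges_of_adj hxy (C := {s(a, b)}) he
      exact ih.imp hreach.trans hreach.trans

namespace IsCut

theorem reachable_or (hC : IsCut G C) {a b : V} (hab : s(a, b) ∈ C) (x : V) :
    (G.deleteEdges C).Reachable x a ∨ (G.deleteEdges C).Reachable x b := by
  have hconn := hC.2.2 _ (Set.sdiff_singleton_ssubset.2 hab)
  simpa [SimpleGraph.deleteEdges_deleteEdges, hab] using
    reachable_deleteEdges_singleton_or (hconn x a) b

theorem not_reachable (hC : IsCut G C) {a b : V} (hab : s(a, b) ∈ C) :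
    ¬ (G.deleteEdges C).Reachable a b := by
  intro h
  have hb (x : V) : (G.deleteEdges C).Reachable x b :=
    (hC.reachable_or hab x).elim (fun hx => hx.trans h) id
  exact hC.2.1 <| (SimpleGraph.connected_iff _).2 ⟨fun x y => (hb x).trans (hb y).symm, ⟨a⟩⟩

theorem even_cutUse_iff (hC : IsCut G C) {u w : V} (p : G.Walk u w) :
    Even (cutUse G p C) ↔ (G.deleteEdges C).Reachable u w := by
  induction p with
  | nil => simp [cutUse_nil]
  | @cons u x w h p ih =>
    rw [cutUse_cons]
    by_cases hux : s(u, x) ∈ C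
    · rw [if_pos hux, Nat.even_add_one, ih]
      constructor
      · exact fun hxw => ((hC.reachable_or hux w).resolve_right fun hwx => hxw hwx.symm).symm
      · exact fun huw hxw => hC.not_reachable hux (huw.trans hxw.symm)
    · have hreach := reachable_deleteEdges_of_adj h hux
      rw [if_neg hux, add_zero, ih]
      exact ⟨hreach.trans, hreach.symm.trans⟩

theorem nonempty (hC : IsCut G C) (hconn : G.Connected) : C.Nonempty := by
  rw [Set.nonempty_iff_ne_empty]
  rintro rfl
  exact hC.2.1 (by rwa [SimpleGraph.deleteEdges_empty])

theorem isSide_compl (hC : IsCut G C) (hconn : G.Connected) {S : Set V} (hS : IsSide G C S) :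
    IsSide G C Sᶜ := by
  obtain ⟨a, rfl⟩ := hS
  obtain ⟨⟨c, d⟩, hcd : s(c, d) ∈ C⟩ := hC.nonempty hconn
  wlog hac : (G.deleteEdges C).Reachable a c generalizing c d
  · exact this d c (Sym2.eq_swap ▸ hcd) ((hC.reachable_or hcd a).resolve_left hac)
  refine ⟨d, Set.ext fun x => ⟨fun hxa => ?_, fun hxd hxa => ?_⟩⟩
  · exact (hC.reachable_or hcd x).resolve_left fun hxc => hxa (hxc.trans hac.symm)
  · exact hC.not_reachable hcd (hac.symm.trans (hxa.symm.trans hxd))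

end IsCut

/-- No shortest path of `G` uses two edges of `C`. A shortest path is encoded as a walk whose length
is the distance between its ends. -/
def GeodesicsCrossAtMostOnce (G : SimpleGraph V) (C : Set (Sym2 V)) : Prop :=
  ∀ (u w : V) (p : G.Walk u w), p.length = G.dist u w → cutUse G p C ≤ 1

theorem IsCut.gConvex_of_isSide (hC : IsCut G C) (hconn : G.Connected)
    (hgeo : GeodesicsCrossAtMostOnce G C) {S : Set V} (hS : IsSide G C S) : GConvex G S := by
  obtain ⟨a, rfl⟩ := hS
  intro u hu w hw x hx
  obtain ⟨p, hp⟩ := hconn.exists_walk_length_eq_dist u x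
  obtain ⟨q, hq⟩ := hconn.exists_walk_length_eq_dist x w
  have hle := hgeo u w (p.append q) (by rw [SimpleGraph.Walk.length_append, hp, hq, hx])
  have heven := (hC.even_cutUse_iff (p.append q)).2 (hu.trans hw.symm)
  rw [cutUse_append] at hle heven
  have hp_even : Even (cutUse G p C) := by grind
  exact ((hC.even_cutUse_iff p).1 hp_even).symm.trans hu

end Cut

section CutPartition

variable {V : Type*} {G : SimpleGraph V} {C : Set (Sym2 V)} {𝒞 : Set (Set (Sym2 V))}

theorem hasSum_cutUse (hdisj : 𝒞.PairwiseDisjoint id) (hcover : G.edgeSet ⊆ ⋃₀ 𝒞) {u w : V}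
    (p : G.Walk u w) : HasSum (fun C : 𝒞 => cutUse G p C) p.length := by
  classical
  induction p with
  | nil => simpa only [cutUse_nil, SimpleGraph.Walk.length_nil] using hasSum_zero
  | @cons u x w h p ih =>
    obtain ⟨C, hC, hux⟩ := hcover (G.mem_edgeSet.2 h)
    have hmem_iff (D : 𝒞) : s(u, x) ∈ D.1 ↔ D = ⟨C, hC⟩ :=
      ⟨fun hD => Subtype.ext (hdisj.elim_set D.2 hC _ hD hux), fun hD => hD ▸ hux⟩
    simp only [cutUse_cons, hmem_iff]
    exact ih.add (hasSum_ite_eq _ 1)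

namespace IsCutPartition

theorem length_eq_dist_of_cutUse_le_one (hpart : IsCutPartition G 𝒞) {u w : V} (p : G.Walk u w)
    (hp : ∀ C ∈ 𝒞, cutUse G p C ≤ 1) : p.length = G.dist u w := by
  obtain ⟨q, hq⟩ := p.reachable.exists_walk_length_eq_dist
  have hle (C : 𝒞) : cutUse G p C ≤ cutUse G q C := by
    have hparity : Even (cutUse G p C) ↔ Even (cutUse G q C) :=
      ((hpart.1 C C.2).even_cutUse_iff p).trans ((hpart.1 C C.2).even_cutUse_iff q).symm
    grind [hp C C.2]
  have hsum {u w : V} (r : G.Walk u w) := hasSum_cutUse hpart.2.1 hpart.2.2.ge r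
  exact ((hasSum_le hle (hsum p) (hsum q)).trans_eq hq).antisymm (SimpleGraph.dist_le p)

theorem dist_add_dist_of_mem_of_reachable (hpart : IsCutPartition G 𝒞) (hconn : G.Connected)
    (hgeo : ∀ C ∈ 𝒞, GeodesicsCrossAtMostOnce G C) (hC : C ∈ 𝒞) {x y w : V} (hxy : s(x, y) ∈ C)
    (hyw : (G.deleteEdges C).Reachable y w) : G.dist x y + G.dist y w = G.dist x w := by
  obtain ⟨q, hq⟩ := hconn.exists_walk_length_eq_dist y w
  have hadj : G.Adj x y := (hpart.1 C hC).1 hxy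
  have hcross : ∀ D ∈ 𝒞, cutUse G (.cons hadj q) D ≤ 1 := by
    intro D hD
    have hqD := hgeo D hD y w q hq
    rw [cutUse_cons]
    by_cases hxyD : s(x, y) ∈ D
    · obtain rfl : D = C := hpart.2.1.elim_set hD hC _ hxyD hxy
      have heven := ((hpart.1 D hD).even_cutUse_iff q).2 hyw
      grind
    · rwa [if_neg hxyD]
  rw [← hpart.length_eq_dist_of_cutUse_le_one _ hcross, SimpleGraph.Walk.length_cons, hq,
    SimpleGraph.dist_eq_one_iff_adj.2 hadj, add_comm]

theorem eq_univ_of_gConvex (hpart : IsCutPartition G 𝒞) (hconn : G.Connected)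
    (hgeo : ∀ C ∈ 𝒞, GeodesicsCrossAtMostOnce G C) {K : Set V} (hK : GConvex G K)
    (hne : K.Nonempty) (hmeet : ∀ C ∈ 𝒞, ∀ S : Set V, IsSide G C S → (S ∩ K).Nonempty) :
    K = Set.univ := by
  have mem_of_adj {x y : V} (hx : x ∈ K) (hxy : G.Adj x y) : y ∈ K := by
    obtain ⟨C, hC, hxyC⟩ := hpart.2.2.ge (G.mem_edgeSet.2 hxy)
    obtain ⟨w, hwy, hwK⟩ := hmeet C hC _ ⟨y, rfl⟩
    exact hK x hx w hwK y
      (hpart.dist_add_dist_of_mem_of_reachable hconn hgeo hC hxyC hwy.symm)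
  obtain ⟨k, hk⟩ := hne
  refine Set.eq_univ_of_forall fun z => ?_
  obtain ⟨p⟩ := hconn k z
  induction p with
  | nil => exact hk
  | cons h _ ih => exact ih (mem_of_adj hk h)

theorem gConvexHull_eq_univ_iff (hpart : IsCutPartition G 𝒞) (hconn : G.Connected)
    (hgeo : ∀ C ∈ 𝒞, GeodesicsCrossAtMostOnce G C) {H : Set V} (hne : H.Nonempty) :
    GConvexHull G H = Set.univ ↔ ∀ C ∈ 𝒞, ∀ S : Set V, IsSide G C S → (S ∩ H).Nonempty := by
  constructor
  · intro hH C hC S hS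
    have hconv : GConvex G Sᶜ := (hpart.1 C hC).gConvex_of_isSide hconn (hgeo C hC)
      ((hpart.1 C hC).isSide_compl hconn hS)
    by_contra hdisj
    have hHS : H ⊆ Sᶜ := fun x hxH hxS => hdisj ⟨x, hxS, hxH⟩
    obtain ⟨x, hx⟩ := hS.nonempty
    exact gConvexHull_subset hconv hHS (hH ▸ Set.mem_univ x) hx
  · intro hmeet
    have hsub := subset_gConvexHull G H
    exact hpart.eq_univ_of_gConvex hconn hgeo (gConvex_gConvexHull G H) (hne.mono hsub)
      fun C hC S hS => (hmeet C hC S hS).mono (Set.inter_subset_inter_right S hsub)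

theorem gConvexHull_insert_eq_univ_iff (hpart : IsCutPartition G 𝒞) (hconn : G.Connected)
    (hgeo : ∀ C ∈ 𝒞, GeodesicsCrossAtMostOnce G C) {v : V} {H : Set V} :
    GConvexHull G (insert v H) = Set.univ ↔ IsOneSidedHitting G 𝒞 v H :=
  (hpart.gConvexHull_eq_univ_iff hconn hgeo (Set.insert_nonempty v H)).trans
    isOneSidedHitting_iff_forall_inter_insert_nonempty.symm

end IsCutPartition

end CutPartition

/-- The hull number equals one plus the minimum over all vertices `v` of `h_v`. -/
theorem hullNumber_eq_min_oneSidedHitting {V : Type*} [Fintype V] (G : SimpleGraph V)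
    (hconn : G.Connected) (𝒞 : Set (Set (Sym2 V))) (hpart : IsCutPartition G 𝒞)
    (hgeo : ∀ (u w : V) (p : G.Walk u w), p.length = G.dist u w →
      ∀ C ∈ 𝒞, cutUse G p C ≤ 1) :
    hullNumber G = (⨅ v : V, oneSidedHitting G 𝒞 v) + 1 := by
  have : Nonempty V := hconn.nonempty
  have hull_iff (v : V) (H : Set V) :=
    hpart.gConvexHull_insert_eq_univ_iff hconn (fun C hC u w p hp => hgeo u w p hp C hC)
      (v := v) (H := H)
  apply le_antisymm
  · obtain ⟨v, hv⟩ := ciInf_mem (oneSidedHitting G 𝒞)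
    obtain ⟨H, hH, hcard⟩ := exists_ncard_eq_oneSidedHitting G 𝒞 v
    calc hullNumber G ≤ (insert v H).ncard := hullNumber_le_ncard ((hull_iff v H).2 hH)
      _ ≤ H.ncard + 1 := Set.ncard_insert_le v H
      _ = (⨅ v : V, oneSidedHitting G 𝒞 v) + 1 := by rw [hcard, hv]
  · obtain ⟨H, hH, hcard⟩ := exists_ncard_eq_hullNumber G
    obtain ⟨v, hv⟩ := nonempty_of_gConvexHull_eq_univ hH
    have hHv : IsOneSidedHitting G 𝒞 v (H \ {v}) :=
      (hull_iff v _).1 (by rwa [Set.insert_sdiff_self_of_mem hv])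
    calc (⨅ v : V, oneSidedHitting G 𝒞 v) + 1
      _ ≤ oneSidedHitting G 𝒞 v + 1 := by gcongr; exact ciInf_le (OrderBot.bddBelow _) v
      _ ≤ (H \ {v}).ncard + 1 := by gcongr; exact hHv.oneSidedHitting_le_ncard
      _ = hullNumber G := by rw [Set.ncard_sdiff_singleton_add_one hv, hcard]
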